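/- arXiv:2401.10086 — 2 statements merged into one kernel-verified Lean document; each statement's English description precedes it below -/
import Mathlib

section
/- Let n ≥ 3 be an integer. For every ε > 0 there exists a constant C = C(n, ε) such that for all real H ≥ 2 and all δ ∈ ℚ, the number of n×n matrices with all entries in F(H) and with determinant equal to δ is at most C·H^{2n²−n+ε}. -/
/-- The set of rationals `a/b` in lowest terms with `|a| ≤ H` and `1 ≤ b ≤ H`. -/
def Farey (H : ℝ) : Set ℚ := {x : ℚ | |(x.num : ℝ)| ≤ H ∧ (x.den : ℝ) ≤ H}

/-!
Expand `det A = δ` along row `i`: once the other rows are fixed, row `i` solves a linear equation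
whose coefficients are their signed maximal minors.

If no minor vanishes, clear denominators to get integer coefficients `c j` of polynomial size in
`H`, and write the unknowns as `r j / s j`. For fixed `s`, the numerator `r 0` is determined modulo
`s 0 / gcd (s 0) (c 0 * ∏ j > 0, s j)`, then `r 1` modulo a similar quotient, and so on. Summing
over `s` costs only divisor functions, so there are `O(H ^ (n + ε))` possible rows `i`, against
`O(H ^ (2 * n * (n - 1)))` choices of the other rows.

If some minor vanishes, the other rows contain a singular square matrix of size `n - 1`, and these
are counted by induction. Row `i` still lies on a hyperplane: for `δ = 0` take `i` such that row `i`
is a linear combination of the other rows.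
-/

open Finset Matrix

/-! ### Divisor sums -/

lemma natCast_succ_le_mul_pow {x y : ℝ} (hx : 1 < x) (hxy : x ≤ y) (v : ℕ) :
    (v : ℝ) + 1 ≤ max 1 (x - 1)⁻¹ * y ^ v := by
  have hx' : 0 < x - 1 := sub_pos.mpr hx
  have bernoulli : 1 + v * (x - 1) ≤ y ^ v :=
    (one_add_mul_sub_le_pow (by linarith) v).trans (by gcongr)
  calc (v : ℝ) + 1 = (x - 1)⁻¹ * (v * (x - 1)) + 1 * 1 := by field_simp
    _ ≤ max 1 (x - 1)⁻¹ * (v * (x - 1)) + max 1 (x - 1)⁻¹ * 1 := by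
        gcongr
        exacts [le_max_right _ _, le_max_left _ _]
    _ = max 1 (x - 1)⁻¹ * (1 + v * (x - 1)) := by ring
    _ ≤ max 1 (x - 1)⁻¹ * y ^ v := by gcongr

lemma natCast_succ_le_pow {y : ℝ} (hy : 2 ≤ y) (v : ℕ) : (v : ℝ) + 1 ≤ y ^ v := by
  calc (v : ℝ) + 1 ≤ 2 ^ v := by exact_mod_cast Nat.lt_two_pow_self (n := v)
    _ ≤ y ^ v := by gcongr

lemma natCast_rpow_eq_prod_primeFactors {m : ℕ} (hm : m ≠ 0) (ε : ℝ) :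
    (m : ℝ) ^ ε = ∏ p ∈ m.primeFactors, ((p : ℝ) ^ ε) ^ m.factorization p := by
  conv_lhs => rw [← Nat.prod_factorization_pow_eq_self hm]
  rw [Finsupp.prod, Nat.support_factorization, Nat.cast_prod, ← Real.finsetProd_rpow _ _ (by simp)]
  refine prod_congr rfl fun p _ ↦ ?_
  rw [Nat.cast_pow, Real.rpow_pow_comm p.cast_nonneg]

theorem exists_card_divisors_le_mul_rpow {ε : ℝ} (hε : 0 < ε) :
    ∃ C : ℝ, 1 ≤ C ∧ ∀ m : ℕ, m ≠ 0 → (#m.divisors : ℝ) ≤ C * (m : ℝ) ^ ε := by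
  obtain ⟨P, hP⟩ := exists_nat_ge ((2 : ℝ) ^ (1 / ε))
  set K : ℝ := max 1 ((2 : ℝ) ^ ε - 1)⁻¹
  have one_le_K : 1 ≤ K := le_max_left _ _
  refine ⟨K ^ P, one_le_pow₀ one_le_K, fun m hm ↦ ?_⟩
  have local_bound : ∀ p ∈ m.primeFactors, (m.factorization p : ℝ) + 1 ≤
      (if p < P then K else 1) * ((p : ℝ) ^ ε) ^ m.factorization p := by
    intro p hp
    have two_le : (2 : ℝ) ≤ p := by exact_mod_cast (Nat.prime_of_mem_primeFactors hp).two_le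
    split_ifs with hpP
    · exact natCast_succ_le_mul_pow (Real.one_lt_rpow one_lt_two hε) (by gcongr) _
    · have large : (2 : ℝ) ^ (1 / ε) ≤ p := hP.trans (by exact_mod_cast not_lt.mp hpP)
      rw [one_mul]
      refine natCast_succ_le_pow ?_ _
      rwa [one_div, Real.rpow_inv_le_iff_of_pos zero_le_two p.cast_nonneg hε] at large
  have small_primes : ∏ p ∈ m.primeFactors, (if p < P then K else 1) ≤ K ^ P := by
    rw [prod_ite, prod_const, prod_const_one, mul_one]
    refine pow_le_pow_right₀ one_le_K ?_
    calc #{p ∈ m.primeFactors | p < P} ≤ #(range P) := card_le_card fun p ↦ by simp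
      _ = P := card_range P
  calc (#m.divisors : ℝ) = ∏ p ∈ m.primeFactors, ((m.factorization p : ℝ) + 1) := by
        rw [Nat.card_divisors hm]; push_cast; rfl
    _ ≤ ∏ p ∈ m.primeFactors,
          ((if p < P then K else 1) * ((p : ℝ) ^ ε) ^ m.factorization p) :=
        prod_le_prod (fun _ _ ↦ by positivity) local_bound
    _ = (∏ p ∈ m.primeFactors, if p < P then K else 1) * (m : ℝ) ^ ε := by
        rw [prod_mul_distrib, natCast_rpow_eq_prod_primeFactors hm]
    _ ≤ K ^ P * (m : ℝ) ^ ε := by gcongr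

theorem exists_card_divisors_mul_log_le_rpow {K : ℝ} (hK : 0 ≤ K) (A : ℕ) {ε : ℝ} (hε : 0 < ε) :
    ∃ C : ℝ, 0 ≤ C ∧ ∀ h m : ℕ, 1 ≤ h → m ≠ 0 → (m : ℝ) ≤ K * (h : ℝ) ^ A →
      #m.divisors * (1 + Real.log h) ≤ C * (h : ℝ) ^ ε := by
  set η := ε / (2 * (A + 1))
  obtain ⟨D, hD, divisors_le⟩ := exists_card_divisors_le_mul_rpow (show 0 < η by positivity)
  refine ⟨D * K ^ η * (1 + 2 / ε), by positivity, fun h m hh hm hmK ↦ ?_⟩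
  have one_le : (1 : ℝ) ≤ h := by exact_mod_cast hh
  have hAη : A * η ≤ ε / 2 := by
    rw [← mul_div_assoc, div_le_div_iff₀ (by positivity) two_pos]
    nlinarith
  have rpow_le : (m : ℝ) ^ η ≤ K ^ η * (h : ℝ) ^ (ε / 2) := by
    calc (m : ℝ) ^ η ≤ (K * (h : ℝ) ^ A) ^ η := by gcongr
      _ = K ^ η * (h : ℝ) ^ (A * η) := by
          rw [Real.mul_rpow hK (by positivity), ← Real.rpow_natCast,
            ← Real.rpow_mul (by positivity)]
      _ ≤ K ^ η * (h : ℝ) ^ (ε / 2) := by gcongr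
  have log_le : 1 + Real.log h ≤ (1 + 2 / ε) * (h : ℝ) ^ (ε / 2) := by
    calc 1 + Real.log h ≤ (h : ℝ) ^ (ε / 2) + (h : ℝ) ^ (ε / 2) / (ε / 2) :=
          add_le_add (Real.one_le_rpow one_le (by positivity))
            (Real.log_le_rpow_div (by positivity) (by positivity))
      _ = (1 + 2 / ε) * (h : ℝ) ^ (ε / 2) := by field_simp
  have := Real.log_nonneg one_le
  calc #m.divisors * (1 + Real.log h)
      ≤ (D * (K ^ η * (h : ℝ) ^ (ε / 2))) * ((1 + 2 / ε) * (h : ℝ) ^ (ε / 2)) := by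
        gcongr
        exact (divisors_le m hm).trans (by gcongr)
    _ = D * K ^ η * (1 + 2 / ε) * (h : ℝ) ^ (ε / 2 + ε / 2) := by
        rw [Real.rpow_add (by positivity)]; ring
    _ = D * K ^ η * (1 + 2 / ε) * (h : ℝ) ^ ε := by rw [add_halves]

lemma sum_Icc_filter_dvd_div_le {d : ℕ} (hd : 0 < d) (h : ℕ) :
    ∑ s ∈ Icc 1 h with d ∣ s, (d : ℝ) / s ≤ 1 + Real.log h := by
  have multiples : {s ∈ Icc 1 h | d ∣ s} ⊆ (Icc 1 h).image (· * d) := by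
    intro s hs
    obtain ⟨hs, t, rfl⟩ := mem_filter.mp hs
    obtain ⟨hs1, hs2⟩ := mem_Icc.mp hs
    have : 0 < t := Nat.pos_of_mul_pos_left hs1
    exact mem_image.mpr ⟨t, mem_Icc.mpr ⟨this, by nlinarith⟩, mul_comm t d⟩
  calc ∑ s ∈ Icc 1 h with d ∣ s, (d : ℝ) / s
      ≤ ∑ s ∈ (Icc 1 h).image (· * d), (d : ℝ) / s :=
        sum_le_sum_of_subset_of_nonneg multiples fun _ _ _ ↦ by positivity
    _ = ∑ t ∈ Icc 1 h, (t : ℝ)⁻¹ := by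
        rw [sum_image fun a _ b _ hab ↦ Nat.eq_of_mul_eq_mul_right hd hab]
        refine sum_congr rfl fun t _ ↦ ?_
        push_cast
        field_simp
    _ ≤ 1 + Real.log h := by
        simpa [harmonic_eq_sum_Icc] using harmonic_le_one_add_log h

theorem sum_Icc_gcd_div_le {m : ℕ} (hm : m ≠ 0) (h : ℕ) :
    ∑ s ∈ Icc 1 h, (s.gcd m : ℝ) / s ≤ #m.divisors * (1 + Real.log h) := by
  calc ∑ s ∈ Icc 1 h, (s.gcd m : ℝ) / s
      ≤ ∑ s ∈ Icc 1 h, ∑ d ∈ m.divisors, if d ∣ s then (d : ℝ) / s else 0 := by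
        refine sum_le_sum fun s _ ↦ ?_
        have gcd_mem : s.gcd m ∈ m.divisors := Nat.mem_divisors.mpr ⟨s.gcd_dvd_right m, hm⟩
        simpa [s.gcd_dvd_left m] using single_le_sum
          (f := fun d : ℕ ↦ if d ∣ s then (d : ℝ) / s else 0) (fun _ _ ↦ by positivity) gcd_mem
    _ = ∑ d ∈ m.divisors, ∑ s ∈ Icc 1 h with d ∣ s, (d : ℝ) / s := by
        rw [sum_comm]
        simp only [sum_filter]
    _ ≤ ∑ _d ∈ m.divisors, (1 + Real.log h) :=
        sum_le_sum fun d hd ↦ sum_Icc_filter_dvd_div_le (Nat.pos_of_mem_divisors hd) h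
    _ = #m.divisors * (1 + Real.log h) := by rw [sum_const, nsmul_eq_mul]

/-! ### Linear equations with prescribed denominators -/

lemma ncard_le_sum_of_ncard_fiber_le {α β : Type*} {S : Set α} (hS : S.Finite) {T : Finset β}
    {f : α → β} (hf : ∀ x ∈ S, f x ∈ T) {g : β → ℝ}
    (hg : ∀ y ∈ T, ({x ∈ S | f x = y}.ncard : ℝ) ≤ g y) : (S.ncard : ℝ) ≤ ∑ y ∈ T, g y := by
  have cover : S ⊆ ⋃ y ∈ T, {x ∈ S | f x = y} := fun x hx ↦
    Set.mem_biUnion (hf x hx) ⟨hx, rfl⟩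
  have ncard_le : S.ncard ≤ ∑ y ∈ T, {x ∈ S | f x = y}.ncard :=
    (Set.ncard_le_ncard cover (T.finite_toSet.biUnion fun _ _ ↦ hS.sep _)).trans
      (T.set_ncard_biUnion_le _)
  calc (S.ncard : ℝ) ≤ ∑ y ∈ T, ({x ∈ S | f x = y}.ncard : ℝ) := by exact_mod_cast ncard_le
    _ ≤ ∑ y ∈ T, g y := sum_le_sum hg

lemma ncard_le_mul_of_ncard_fiber_le {α β : Type*} {S : Set α} (hS : S.Finite) {T : Set β}
    (hT : T.Finite) {f : α → β} (hf : Set.MapsTo f S T) {b : ℝ}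
    (hb : ∀ y ∈ T, ({x ∈ S | f x = y}.ncard : ℝ) ≤ b) : (S.ncard : ℝ) ≤ T.ncard * b := by
  calc (S.ncard : ℝ) ≤ ∑ _y ∈ hT.toFinset, b :=
        ncard_le_sum_of_ncard_fiber_le hS (fun x hx ↦ hT.mem_toFinset.mpr (hf hx))
          fun y hy ↦ hb y (hT.mem_toFinset.mp hy)
    _ = T.ncard * b := by rw [sum_const, nsmul_eq_mul, Set.ncard_eq_toFinset_card T hT]

lemma ncard_setOf_forall_mem {ι α : Type*} [Fintype ι] (F : Set α) :
    {x : ι → α | ∀ j, x j ∈ F}.ncard = F.ncard ^ Fintype.card ι := by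
  calc {x : ι → α | ∀ j, x j ∈ F}.ncard = Nat.card (ι → F) :=
        Nat.card_congr Equiv.subtypePiEquivPi
    _ = F.ncard ^ Fintype.card ι := by
        rw [Nat.card_fun, Nat.card_eq_fintype_card (α := ι)]
        rfl

lemma sum_piFinset_const_succ {α M : Type*} [AddCommMonoid M] {k : ℕ} (S : Finset α)
    (g : (Fin (k + 1) → α) → M) :
    ∑ s ∈ Fintype.piFinset fun _ ↦ S, g s =
      ∑ t ∈ Fintype.piFinset fun _ ↦ S, ∑ a ∈ S, g (Fin.cons a t) := by
  rw [sum_comm, ← sum_product']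
  exact sum_equiv (Fin.consEquiv fun _ ↦ α).symm
    (fun s ↦ by simp [Fin.forall_fin_succ, Fin.tail]) fun s _ ↦ by simp [Fin.consEquiv]

lemma card_Ioc_filter_modEq_le {q : ℕ} (hq : 0 < q) (a b v : ℤ) (hab : a ≤ b) :
    (#{x ∈ Ioc a b | x ≡ v [ZMOD q]} : ℝ) ≤ (b - a) / q + 1 := by
  have card_eq : (#{x ∈ Ioc a b | x ≡ v [ZMOD q]} : ℚ) =
      max (⌊(b - v) / (q : ℚ)⌋ - ⌊(a - v) / (q : ℚ)⌋ : ℚ) 0 := by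
    exact_mod_cast congrArg (Int.cast : ℤ → ℚ)
      (Int.Ioc_filter_modEq_card a b (by exact_mod_cast hq : (0 : ℤ) < q) v)
  have hab' : (a : ℚ) ≤ b := by exact_mod_cast hab
  have card_le : (#{x ∈ Ioc a b | x ≡ v [ZMOD q]} : ℚ) ≤ (b - a) / q + 1 := by
    rw [card_eq]
    refine max_le ?_ (by have := sub_nonneg.mpr hab'; positivity)
    have floor_le := Int.floor_le ((b - v) / (q : ℚ))
    have lt_floor := Int.sub_one_lt_floor ((a - v) / (q : ℚ))
    have : ((b : ℚ) - a) / q = (b - v) / q - (a - v) / q := by ring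
    linarith
  exact_mod_cast (Rat.cast_le (K := ℝ)).mpr card_le

lemma ncard_le_four_mul_div_of_modEq {h q : ℕ} (hq : 0 < q) (hqh : q ≤ h) {T : Set ℤ}
    (hT : ∀ x ∈ T, |x| ≤ h) (hmod : ∀ x ∈ T, ∀ y ∈ T, x ≡ y [ZMOD q]) :
    (T.ncard : ℝ) ≤ 4 * h / q := by
  obtain rfl | ⟨v, hv⟩ := T.eq_empty_or_nonempty
  · rw [Set.ncard_empty, Nat.cast_zero]
    positivity
  have subset : T ⊆ ({x ∈ Ioc (-(h : ℤ) - 1) h | x ≡ v [ZMOD q]} : Finset ℤ) := by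
    intro x hx
    have := abs_le.mp (hT x hx)
    exact mem_coe.mpr (mem_filter.mpr ⟨mem_Ioc.mpr ⟨by omega, this.2⟩, hmod x hx v hv⟩)
  have hq' : (0 : ℝ) < q := by exact_mod_cast hq
  have hqh' : (q : ℝ) ≤ h := by exact_mod_cast hqh
  have one_le : (1 : ℝ) ≤ h := by exact_mod_cast hq.trans_le hqh
  calc (T.ncard : ℝ) ≤ #{x ∈ Ioc (-(h : ℤ) - 1) h | x ≡ v [ZMOD q]} := by
        rw [← Set.ncard_coe_finset]
        exact_mod_cast Set.ncard_le_ncard subset (finite_toSet _)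
    _ ≤ ((h : ℤ) - (-(h : ℤ) - 1 : ℤ)) / q + 1 := card_Ioc_filter_modEq_le hq _ _ v (by omega)
    _ ≤ 4 * h / q := by
        push_cast
        field_simp
        linarith

lemma exists_int_eq_prod_mul_sum_div {ι : Type*} [Fintype ι] (a s : ι → ℤ) (hs : ∀ j, s j ≠ 0) :
    ∃ z : ℤ, (∏ j, (s j : ℚ)) * ∑ j, (a j : ℚ) / s j = z := by
  classical
  refine ⟨∑ j, a j * ∏ i ∈ univ.erase j, s i, ?_⟩
  rw [mul_sum]
  push_cast
  refine sum_congr rfl fun j _ ↦ ?_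
  have : (s j : ℚ) ≠ 0 := by exact_mod_cast hs j
  rw [← mul_prod_erase univ _ (mem_univ j)]
  field_simp

/-- The admissible numerators `r` of the solutions `x j = r j / s j` of `∑ j, c j * x j = t` with
prescribed denominators `s`. The fractions `r j / s j` need not be reduced. -/
def numeratorSolutions {ι : Type*} [Fintype ι] (h : ℕ) (c : ι → ℤ) (s : ι → ℕ) (t : ℚ) :
    Set (ι → ℤ) :=
  {r | (∀ j, |r j| ≤ h) ∧ ∑ j, (c j : ℚ) * (r j / s j) = t}

lemma finite_setOf_abs_le (h : ℕ) : {x : ℤ | |x| ≤ h}.Finite :=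
  (Set.finite_Icc (-(h : ℤ)) h).subset fun _ hx ↦ abs_le.mp hx

namespace numeratorSolutions

lemma finite {ι : Type*} [Fintype ι] (h : ℕ) (c : ι → ℤ) (s : ι → ℕ) (t : ℚ) :
    (numeratorSolutions h c s t).Finite :=
  (Set.Finite.pi' fun _ ↦ finite_setOf_abs_le h).subset fun _ hr ↦ hr.1

variable {k h : ℕ} {c : Fin (k + 1) → ℤ} {s : Fin (k + 1) → ℕ} {t : ℚ}

lemma tail_mem {r : Fin (k + 1) → ℤ} (hr : r ∈ numeratorSolutions h c s t) :
    Fin.tail r ∈ numeratorSolutions h (Fin.tail c) (Fin.tail s) (t - c 0 * (r 0 / s 0)) := by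
  refine ⟨fun j ↦ hr.1 j.succ, eq_sub_of_add_eq' ?_⟩
  rw [← hr.2, Fin.sum_univ_succ]
  rfl

/-- Multiplying the equation by all the denominators but the first leaves `s 0` as the only
denominator, so `r 0` is determined modulo `s 0` up to the factor it is multiplied with. -/
lemma head_modEq (hs : ∀ j, 0 < s j) {r r' : Fin (k + 1) → ℤ}
    (hr : r ∈ numeratorSolutions h c s t) (hr' : r' ∈ numeratorSolutions h c s t) :
    r 0 ≡ r' 0 [ZMOD s 0 / Int.gcd (s 0) (c 0 * ∏ j : Fin k, (s j.succ : ℤ))] := by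
  refine Int.ModEq.cancel_left_div_gcd (by exact_mod_cast hs 0) (Int.modEq_iff_dvd.mpr ?_)
  obtain ⟨z, hz⟩ := exists_int_eq_prod_mul_sum_div
    (fun j : Fin k ↦ c j.succ * (r j.succ - r' j.succ)) (fun j ↦ (s j.succ : ℤ))
    fun j ↦ by exact_mod_cast (hs j.succ).ne'
  have head_eq : (c 0 : ℚ) * (r' 0 - r 0) =
      s 0 * ∑ j : Fin k, ((c j.succ * (r j.succ - r' j.succ) : ℤ) : ℚ) / ((s j.succ : ℤ) : ℚ) := by
    have eq := hr.2.trans hr'.2.symm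
    have s_zero_ne : (s 0 : ℚ) ≠ 0 := by exact_mod_cast (hs 0).ne'
    have expand :
        ∑ j : Fin k, ((c j.succ * (r j.succ - r' j.succ) : ℤ) : ℚ) / ((s j.succ : ℤ) : ℚ) =
        ∑ j : Fin k, (c j.succ : ℚ) * (r j.succ / s j.succ) -
          ∑ j : Fin k, (c j.succ : ℚ) * (r' j.succ / s j.succ) := by
      rw [← sum_sub_distrib]
      refine sum_congr rfl fun j _ ↦ ?_
      push_cast
      ring
    rw [Fin.sum_univ_succ, Fin.sum_univ_succ] at eq
    rw [expand, sub_eq_iff_eq_add.mpr (eq_sub_of_add_eq' eq |>.trans (add_sub_right_comm _ _ _))]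
    field_simp
  refine ⟨z, ?_⟩
  qify
  rw [← hz, ← mul_sub, mul_right_comm, head_eq]
  push_cast
  ring

lemma ncard_le (hs : ∀ j, 0 < s j ∧ s j ≤ h) {b : ℝ}
    (hb : ∀ t, ((numeratorSolutions h (Fin.tail c) (Fin.tail s) t).ncard : ℝ) ≤ b) :
    ((numeratorSolutions h c s t).ncard : ℝ) ≤
      4 * h * (Nat.gcd (s 0) (c 0 * ∏ j : Fin k, (s j.succ : ℤ)).natAbs / s 0) * b := by
  set S := numeratorSolutions h c s t
  set g := Nat.gcd (s 0) (c 0 * ∏ j : Fin k, (s j.succ : ℤ)).natAbs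
  have g_dvd : g ∣ s 0 := Nat.gcd_dvd_left _ _
  have s_zero_pos := (hs 0).1
  have heads : (((fun r ↦ r 0) '' S).ncard : ℝ) ≤ 4 * h * (g / s 0) := by
    calc (((fun r ↦ r 0) '' S).ncard : ℝ) ≤ 4 * h / (s 0 / g : ℕ) := by
          refine ncard_le_four_mul_div_of_modEq (Nat.div_pos (Nat.le_of_dvd s_zero_pos g_dvd)
            (Nat.gcd_pos_of_pos_left _ s_zero_pos)) ((Nat.div_le_self _ _).trans (hs 0).2) ?_ ?_
          · rintro _ ⟨r, hr, rfl⟩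
            exact hr.1 0
          · rintro _ ⟨r, hr, rfl⟩ _ ⟨r', hr', rfl⟩
            exact head_modEq (fun j ↦ (hs j).1) hr hr'
      _ = 4 * h * (g / s 0) := by
          rw [Nat.cast_div_charZero g_dvd]
          field_simp
  have fibers : ∀ a ∈ (fun r ↦ r 0) '' S, ({r ∈ S | r 0 = a}.ncard : ℝ) ≤ b := by
    intro a _
    refine le_trans ?_ (hb (t - c 0 * (a / s 0)))
    refine Nat.cast_le.mpr (Set.ncard_le_ncard_of_injOn Fin.tail ?_ ?_ (finite _ _ _ _))
    · rintro r ⟨hr, rfl⟩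
      exact tail_mem hr
    · rintro r ⟨-, hr⟩ r' ⟨-, hr'⟩ tail_eq
      rw [← Fin.cons_self_tail r, ← Fin.cons_self_tail r', tail_eq, hr, hr']
  have b_nonneg : 0 ≤ b := (Nat.cast_nonneg _).trans (hb 0)
  calc (S.ncard : ℝ) ≤ ((fun r ↦ r 0) '' S).ncard * b :=
        ncard_le_mul_of_ncard_fiber_le (finite _ _ _ _) ((finite _ _ _ _).image _)
          (Set.mapsTo_image _ _) fibers
    _ ≤ 4 * h * (g / s 0) * b := by gcongr

end numeratorSolutions

/-- A bound for the number of elements of `numeratorSolutions h c s t` that does not depend on `t`: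
once `r i` is known for `i < j`, the numerator `r j` is known modulo
`s j / gcd (s j) (c j * ∏ i > j, s i)`. -/
noncomputable def numeratorWeight {k : ℕ} (h : ℕ) (c : Fin k → ℤ) (s : Fin k → ℕ) : ℝ :=
  ∏ j, 4 * h * (Nat.gcd (s j) (c j * ∏ i ∈ Ioi j, (s i : ℤ)).natAbs / s j : ℝ)

namespace numeratorWeight

lemma nonneg {k : ℕ} (h : ℕ) (c : Fin k → ℤ) (s : Fin k → ℕ) : 0 ≤ numeratorWeight h c s :=
  prod_nonneg fun _ _ ↦ by positivity

lemma succ {k : ℕ} (h : ℕ) (c : Fin (k + 1) → ℤ) (s : Fin (k + 1) → ℕ) :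
    numeratorWeight h c s =
      4 * h * (Nat.gcd (s 0) (c 0 * ∏ j : Fin k, (s j.succ : ℤ)).natAbs / s 0) *
        numeratorWeight h (Fin.tail c) (Fin.tail s) := by
  simp only [numeratorWeight, Fin.prod_univ_succ, Fin.prod_Ioi_zero, Fin.prod_Ioi_succ]
  rfl

end numeratorWeight

lemma ncard_numeratorSolutions_le {k h : ℕ} (c : Fin k → ℤ) (s : Fin k → ℕ)
    (hs : ∀ j, 0 < s j ∧ s j ≤ h) (t : ℚ) :
    ((numeratorSolutions h c s t).ncard : ℝ) ≤ numeratorWeight h c s := by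
  induction k generalizing t with
  | zero =>
    have : (numeratorSolutions h c s t).ncard ≤ 1 := Set.ncard_le_one_of_subsingleton _
    simpa [numeratorWeight] using this
  | succ k ih =>
    rw [numeratorWeight.succ]
    exact numeratorSolutions.ncard_le hs fun t ↦ ih _ _ (fun j ↦ hs j.succ) t

lemma sum_Icc_gcd_mul_prod_div_le {k h : ℕ} {a : ℤ} (ha : a ≠ 0) {M : ℕ} (haM : |a| ≤ M) {T : ℝ}
    (hT : ∀ m : ℕ, m ≠ 0 → m ≤ M * h ^ k → #m.divisors * (1 + Real.log h) ≤ T) {t : Fin k → ℕ}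
    (ht : ∀ j, 0 < t j ∧ t j ≤ h) :
    ∑ b ∈ Icc 1 h, (Nat.gcd b (a * ∏ j, (t j : ℤ)).natAbs / b : ℝ) ≤ T := by
  have natAbs_ne : (a * ∏ j, (t j : ℤ)).natAbs ≠ 0 := by
    rw [Int.natAbs_ne_zero]
    exact mul_ne_zero ha (prod_ne_zero_iff.mpr fun j _ ↦ by exact_mod_cast (ht j).1.ne')
  have natAbs_le : (a * ∏ j, (t j : ℤ)).natAbs ≤ M * h ^ k := by
    rw [Int.natAbs_mul, ← Nat.cast_prod, Int.natAbs_natCast]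
    gcongr
    · exact_mod_cast Int.abs_eq_natAbs a ▸ haM
    · simpa using prod_le_pow_card univ t h fun j _ ↦ (ht j).2
  exact (sum_Icc_gcd_div_le natAbs_ne h).trans (hT _ natAbs_ne natAbs_le)

lemma sum_numeratorWeight_le {k h : ℕ} (hh : 1 ≤ h) {c : Fin k → ℤ} (hc : ∀ j, c j ≠ 0) {M : ℕ}
    (hcM : ∀ j, |c j| ≤ M) {T : ℝ}
    (hT : ∀ m : ℕ, m ≠ 0 → m ≤ M * h ^ k → #m.divisors * (1 + Real.log h) ≤ T) :
    ∑ s ∈ Fintype.piFinset fun _ ↦ Icc 1 h, numeratorWeight h c s ≤ (4 * h * T) ^ k := by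
  induction k with
  | zero => simp [numeratorWeight]
  | succ k ih =>
    have hT' : ∀ m : ℕ, m ≠ 0 → m ≤ M * h ^ k → #m.divisors * (1 + Real.log h) ≤ T :=
      fun m hm hmM ↦ hT m hm (hmM.trans (by gcongr; omega))
    have tail_le : ∑ t ∈ Fintype.piFinset fun _ ↦ Icc 1 h, numeratorWeight h (Fin.tail c) t ≤
        (4 * h * T) ^ k := ih (fun j ↦ hc j.succ) (fun j ↦ hcM j.succ) hT'
    have head_le : ∀ t ∈ Fintype.piFinset fun _ : Fin k ↦ Icc 1 h,
        ∑ a ∈ Icc 1 h, (Nat.gcd a (c 0 * ∏ j, (t j : ℤ)).natAbs / a : ℝ) ≤ T := fun t ht ↦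
      sum_Icc_gcd_mul_prod_div_le (hc 0) (hcM 0) hT' fun j ↦
        mem_Icc.mp (Fintype.mem_piFinset.mp ht j)
    have T_nonneg : 0 ≤ T :=
      (sum_nonneg fun _ _ ↦ by positivity).trans
        (head_le (fun _ ↦ 1) (Fintype.mem_piFinset.mpr fun _ ↦ left_mem_Icc.mpr hh))
    calc ∑ s ∈ Fintype.piFinset fun _ ↦ Icc 1 h, numeratorWeight h c s
        = ∑ t ∈ Fintype.piFinset fun _ ↦ Icc 1 h,
            4 * h * (∑ a ∈ Icc 1 h, (Nat.gcd a (c 0 * ∏ j, (t j : ℤ)).natAbs / a : ℝ)) *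
              numeratorWeight h (Fin.tail c) t := by
          simp only [sum_piFinset_const_succ, numeratorWeight.succ, Fin.cons_zero, Fin.cons_succ,
            Fin.tail_cons, sum_mul, mul_sum]
      _ ≤ ∑ t ∈ Fintype.piFinset fun _ ↦ Icc 1 h,
            4 * h * T * numeratorWeight h (Fin.tail c) t := by
          refine sum_le_sum fun t ht ↦ mul_le_mul_of_nonneg_right ?_ (numeratorWeight.nonneg _ _ _)
          gcongr
          exact head_le t ht
      _ ≤ 4 * h * T * (4 * h * T) ^ k := by
          rw [← mul_sum]
          gcongr
      _ = (4 * h * T) ^ (k + 1) := by rw [pow_succ']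

/-! ### Determinants over a finite grid -/

/-- The points of the grid `F ^ ι` on the hyperplane `c ⬝ᵥ x = t`. -/
def gridHyperplane {ι R : Type*} [Fintype ι] [CommRing R] (F : Set R) (c : ι → R) (t : R) :
    Set (ι → R) :=
  {x | (∀ j, x j ∈ F) ∧ c ⬝ᵥ x = t}

namespace gridHyperplane

lemma finite {ι R : Type*} [Fintype ι] [CommRing R] {F : Set R} (hF : F.Finite) (c : ι → R)
    (t : R) : (gridHyperplane F c t).Finite :=
  (Set.Finite.pi' fun _ ↦ hF).subset fun _ hx ↦ hx.1

lemma ncard_le_pow {K : Type*} [Field K] {n : ℕ} {F : Set K} (hF : F.Finite) {c : Fin (n + 1) → K}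
    (hc : c ≠ 0) (t : K) : (gridHyperplane F c t).ncard ≤ F.ncard ^ n := by
  obtain ⟨j, hj⟩ := Function.ne_iff.mp hc
  calc (gridHyperplane F c t).ncard ≤ {y : Fin n → K | ∀ k, y k ∈ F}.ncard := by
        refine Set.ncard_le_ncard_of_injOn j.removeNth (fun x hx k ↦ hx.1 _)
          (fun x hx y hy removeNth_eq ↦ ?_) (Set.Finite.pi' fun _ ↦ hF)
        have eq := hx.2.trans hy.2.symm
        have others_eq (k : Fin n) : x (j.succAbove k) = y (j.succAbove k) :=
          congrFun removeNth_eq k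
        simp only [dotProduct, Fin.sum_univ_succAbove _ j, others_eq] at eq
        rw [← j.insertNth_self_removeNth x, ← j.insertNth_self_removeNth y, removeNth_eq,
          mul_left_cancel₀ hj (add_right_cancel eq)]
    _ = F.ncard ^ n := by rw [ncard_setOf_forall_mem, Fintype.card_fin]

end gridHyperplane

lemma finite_matrix {m n R : Type*} [Finite m] [Finite n] {F : Set R} (hF : F.Finite) :
    (F.matrix : Set (Matrix m n R)).Finite :=
  Set.Finite.pi' fun _ ↦ Set.Finite.pi' fun _ ↦ hF

lemma ncard_matrix {m n R : Type*} [Fintype m] [Fintype n] (F : Set R) :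
    (F.matrix : Set (Matrix m n R)).ncard = F.ncard ^ (Fintype.card m * Fintype.card n) := by
  calc (F.matrix : Set (Matrix m n R)).ncard
      = {x : n → R | ∀ j, x j ∈ F}.ncard ^ Fintype.card m :=
        ncard_setOf_forall_mem {x : n → R | ∀ j, x j ∈ F}
    _ = F.ncard ^ (Fintype.card m * Fintype.card n) := by
        rw [ncard_setOf_forall_mem, ← pow_mul, mul_comm]

/-- The signed maximal minors of `B`: the coefficients in the expansion along row `i` of the
determinant of a square matrix whose other rows form `B`. -/
def rowCofactors {R : Type*} [CommRing R] {n : ℕ} (i : Fin (n + 1))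
    (B : Matrix (Fin n) (Fin (n + 1)) R) : Fin (n + 1) → R :=
  fun j ↦ (-1) ^ (i + j : ℕ) * (B.submatrix id j.succAbove).det

lemma det_eq_rowCofactors_dotProduct {R : Type*} [CommRing R] {n : ℕ}
    (A : Matrix (Fin (n + 1)) (Fin (n + 1)) R) (i : Fin (n + 1)) :
    A.det = rowCofactors i (A.submatrix i.succAbove id) ⬝ᵥ A i := by
  rw [A.det_succ_row i, dotProduct]
  exact sum_congr rfl fun j _ ↦ mul_right_comm _ _ _

/-- The `n × n` matrices with entries in `F` and determinant `δ`. -/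
def matricesWithDet {R : Type*} [CommRing R] (n : ℕ) (F : Set R) (δ : R) :
    Set (Matrix (Fin n) (Fin n) R) :=
  {A | A ∈ F.matrix ∧ A.det = δ}

/-- The matrices of `matricesWithDet (n + 1) F δ` whose row `i`, in case `δ = 0`, is a linear
combination of the other rows. It is convenient to express the latter by duality: every vector
orthogonal to the other rows is orthogonal to row `i`. -/
def matricesWithDetSpannedRow {R : Type*} [CommRing R] {n : ℕ} (F : Set R) (δ : R)
    (i : Fin (n + 1)) : Set (Matrix (Fin (n + 1)) (Fin (n + 1)) R) :=
  {A ∈ matricesWithDet (n + 1) F δ |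
    δ = 0 → ∀ w, A.submatrix i.succAbove id *ᵥ w = 0 → A i ⬝ᵥ w = 0}

section FiniteGrid

variable {K : Type*} [Field K] {n : ℕ} {F : Set K} {δ : K}

lemma finite_matricesWithDet (hF : F.Finite) : (matricesWithDet n F δ).Finite :=
  (finite_matrix hF).subset fun _ hA ↦ hA.1

lemma matricesWithDet_subset_iUnion_spannedRow :
    matricesWithDet (n + 1) F δ ⊆ ⋃ i, matricesWithDetSpannedRow F δ i := by
  intro A hA
  by_cases hδ : δ = 0
  · obtain ⟨u, hu, huA⟩ := Matrix.exists_vecMul_eq_zero_iff.mpr (hA.2.trans hδ)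
    obtain ⟨i, hi⟩ := Function.ne_iff.mp hu
    refine Set.mem_iUnion.mpr ⟨i, hA, fun _ w hw ↦ ?_⟩
    have relation : u ⬝ᵥ (A *ᵥ w) = 0 := by
      rw [Matrix.dotProduct_mulVec, huA, zero_dotProduct]
    have others_eq_zero (k : Fin n) : (A *ᵥ w) (i.succAbove k) = 0 := congrFun hw k
    simp only [dotProduct, Fin.sum_univ_succAbove _ i, others_eq_zero, mul_zero, sum_const_zero,
      add_zero] at relation
    exact (mul_eq_zero.mp relation).resolve_left hi
  · exact Set.mem_iUnion.mpr ⟨0, hA, fun h ↦ absurd h hδ⟩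

lemma exists_ne_zero_mulVec_eq_zero (B : Matrix (Fin n) (Fin (n + 1)) K) :
    ∃ w ≠ 0, B *ᵥ w = 0 := by
  obtain ⟨w, hw, hw_ne⟩ := Submodule.exists_mem_ne_zero_of_ne_bot
    (LinearMap.ker_ne_bot_of_finrank_lt (f := B.mulVecLin) (by simp))
  exact ⟨w, hw_ne, hw⟩

lemma exists_hyperplane_of_spannedRow (F : Set K) (δ : K) (i : Fin (n + 1))
    (B : Matrix (Fin n) (Fin (n + 1)) K) :
    ∃ c ≠ 0, ∃ t, ∀ A ∈ matricesWithDetSpannedRow F δ i,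
      A.submatrix i.succAbove id = B → c ⬝ᵥ A i = t := by
  by_cases hB : rowCofactors i B = 0
  · obtain ⟨w, hw, hBw⟩ := exists_ne_zero_mulVec_eq_zero B
    refine ⟨w, hw, 0, ?_⟩
    rintro A ⟨hA, spanned⟩ rfl
    rw [dotProduct_comm]
    refine spanned ?_ w hBw
    rw [← hA.2, det_eq_rowCofactors_dotProduct A i, hB, zero_dotProduct]
  · refine ⟨rowCofactors i B, hB, δ, ?_⟩
    rintro A ⟨hA, -⟩ rfl
    rw [← det_eq_rowCofactors_dotProduct, hA.2]

lemma ncard_fiber_le_ncard_gridHyperplane (hF : F.Finite)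
    {S : Set (Matrix (Fin (n + 1)) (Fin (n + 1)) K)} (hS : S ⊆ F.matrix) {i : Fin (n + 1)}
    {B : Matrix (Fin n) (Fin (n + 1)) K} {c : Fin (n + 1) → K} {t : K}
    (hc : ∀ A ∈ S, A.submatrix i.succAbove id = B → c ⬝ᵥ A i = t) :
    {A ∈ S | A.submatrix i.succAbove id = B}.ncard ≤ (gridHyperplane F c t).ncard := by
  refine Set.ncard_le_ncard_of_injOn (fun A ↦ A i) (fun A hA ↦ ⟨hS hA.1 i, hc A hA.1 hA.2⟩) ?_
    (gridHyperplane.finite hF c t)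
  rintro A ⟨-, rfl⟩ A' ⟨-, hA'⟩ row_eq
  ext k l
  induction k using i.succAboveCases with
  | x => exact congrFun row_eq l
  | p k => exact congrFun₂ hA'.symm k l

lemma ncard_setOf_det_submatrix_eq_zero_le (hF : F.Finite) (j : Fin (n + 1)) :
    {B : Matrix (Fin n) (Fin (n + 1)) K |
      B ∈ F.matrix ∧ (B.submatrix id j.succAbove).det = 0}.ncard ≤
        (matricesWithDet n F 0).ncard * F.ncard ^ n := by
  calc _ ≤ (matricesWithDet n F 0 ×ˢ {x : Fin n → K | ∀ k, x k ∈ F}).ncard := by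
        refine Set.ncard_le_ncard_of_injOn (fun B ↦ (B.submatrix id j.succAbove, fun k ↦ B k j))
          (fun B hB ↦ ⟨⟨fun k l ↦ hB.1 _ _, hB.2⟩, fun k ↦ hB.1 _ _⟩) (fun B _ B' _ eq ↦ ?_)
          ((finite_matricesWithDet hF).prod (Set.Finite.pi' fun _ ↦ hF))
        obtain ⟨minor_eq, column_eq⟩ := Prod.mk.inj eq
        ext k l
        induction l using j.succAboveCases with
        | x => exact congrFun column_eq k
        | p l => exact congrFun₂ minor_eq k l
    _ = (matricesWithDet n F 0).ncard * F.ncard ^ n := by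
        rw [Set.ncard_prod, ncard_setOf_forall_mem, Fintype.card_fin]

lemma ncard_setOf_exists_rowCofactors_eq_zero_le (hF : F.Finite) (i : Fin (n + 1)) :
    {B : Matrix (Fin n) (Fin (n + 1)) K | B ∈ F.matrix ∧ ∃ j, rowCofactors i B j = 0}.ncard ≤
      (n + 1) * ((matricesWithDet n F 0).ncard * F.ncard ^ n) := by
  have cover : {B : Matrix (Fin n) (Fin (n + 1)) K | B ∈ F.matrix ∧ ∃ j, rowCofactors i B j = 0} ⊆
      ⋃ j : Fin (n + 1), {B | B ∈ F.matrix ∧ (B.submatrix id j.succAbove).det = 0} := by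
    rintro B ⟨hB, j, hj⟩
    refine Set.mem_iUnion.mpr ⟨j, hB, (mul_eq_zero.mp hj).resolve_left ?_⟩
    exact pow_ne_zero _ (neg_ne_zero.mpr one_ne_zero)
  calc _ ≤ _ := Set.ncard_le_ncard cover
        (Set.finite_iUnion fun _ ↦ (finite_matrix hF).subset fun _ hB ↦ hB.1)
    _ ≤ ∑ j : Fin (n + 1), {B : Matrix (Fin n) (Fin (n + 1)) K |
          B ∈ F.matrix ∧ (B.submatrix id j.succAbove).det = 0}.ncard :=
        Set.ncard_iUnion_le_of_fintype _
    _ ≤ ∑ _j : Fin (n + 1), (matricesWithDet n F 0).ncard * F.ncard ^ n :=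
        sum_le_sum fun j _ ↦ ncard_setOf_det_submatrix_eq_zero_le hF j
    _ = (n + 1) * ((matricesWithDet n F 0).ncard * F.ncard ^ n) := by
        rw [sum_const, card_univ, Fintype.card_fin, smul_eq_mul]

lemma ncard_setOf_forall_rowCofactors_ne_zero_le (hF : F.Finite) {N : ℝ} {i : Fin (n + 1)}
    (hN : ∀ B : Matrix (Fin n) (Fin (n + 1)) K, B ∈ F.matrix → (∀ j, rowCofactors i B j ≠ 0) →
      ((gridHyperplane F (rowCofactors i B) δ).ncard : ℝ) ≤ N) (N_nonneg : 0 ≤ N) :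
    ({A ∈ matricesWithDet (n + 1) F δ |
      ∀ j, rowCofactors i (A.submatrix i.succAbove id) j ≠ 0}.ncard : ℝ) ≤
        (F.ncard : ℝ) ^ (n * (n + 1)) * N := by
  set S := {A ∈ matricesWithDet (n + 1) F δ |
    ∀ j, rowCofactors i (A.submatrix i.succAbove id) j ≠ 0}
  have S_subset : S ⊆ F.matrix := fun A hA ↦ hA.1.1
  calc (S.ncard : ℝ) ≤ (F.matrix : Set (Matrix (Fin n) (Fin (n + 1)) K)).ncard * N := by
        refine ncard_le_mul_of_ncard_fiber_le ((finite_matrix hF).subset S_subset)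
          (finite_matrix hF) (f := fun A ↦ A.submatrix i.succAbove id)
          (fun A hA k l ↦ S_subset hA _ _) fun B hB ↦ ?_
        by_cases hB' : ∀ j, rowCofactors i B j ≠ 0
        · refine le_trans (Nat.cast_le.mpr ?_) (hN B hB hB')
          refine ncard_fiber_le_ncard_gridHyperplane hF S_subset ?_
          rintro A ⟨hA, -⟩ rfl
          rw [← det_eq_rowCofactors_dotProduct, hA.2]
        · have empty : {A ∈ S | A.submatrix i.succAbove id = B} = ∅ :=
            Set.eq_empty_of_forall_notMem fun A hA ↦ hB' (hA.2 ▸ hA.1.2)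
          rwa [empty, Set.ncard_empty, Nat.cast_zero]
    _ = (F.ncard : ℝ) ^ (n * (n + 1)) * N := by
        rw [ncard_matrix, Fintype.card_fin, Fintype.card_fin, Nat.cast_pow]

lemma ncard_setOf_spannedRow_exists_rowCofactors_eq_zero_le (hF : F.Finite) (i : Fin (n + 1)) :
    ({A ∈ matricesWithDetSpannedRow F δ i |
      ∃ j, rowCofactors i (A.submatrix i.succAbove id) j = 0}.ncard : ℝ) ≤
        (n + 1) * ((matricesWithDet n F 0).ncard * (F.ncard : ℝ) ^ n) * (F.ncard : ℝ) ^ n := by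
  set S := {A ∈ matricesWithDetSpannedRow F δ i |
    ∃ j, rowCofactors i (A.submatrix i.succAbove id) j = 0}
  have S_subset : S ⊆ F.matrix := fun A hA ↦ hA.1.1.1
  have mapsTo : Set.MapsTo (fun A ↦ A.submatrix i.succAbove id) S
      {B | B ∈ F.matrix ∧ ∃ j, rowCofactors i B j = 0} :=
    fun A hA ↦ ⟨fun k l ↦ S_subset hA _ _, hA.2⟩
  calc (S.ncard : ℝ)
      ≤ {B : Matrix (Fin n) (Fin (n + 1)) K |
          B ∈ F.matrix ∧ ∃ j, rowCofactors i B j = 0}.ncard * (F.ncard : ℝ) ^ n := by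
        refine ncard_le_mul_of_ncard_fiber_le ((finite_matrix hF).subset S_subset)
          ((finite_matrix hF).subset fun _ hB ↦ hB.1) mapsTo fun B _ ↦ ?_
        obtain ⟨c, hc, t, hct⟩ := exists_hyperplane_of_spannedRow F δ i B
        exact_mod_cast (ncard_fiber_le_ncard_gridHyperplane hF S_subset fun A hA ↦
          hct A hA.1).trans (gridHyperplane.ncard_le_pow hF hc t)
    _ ≤ _ := by
        gcongr
        exact_mod_cast ncard_setOf_exists_rowCofactors_eq_zero_le hF i

lemma ncard_matricesWithDetSpannedRow_le (hF : F.Finite) {N : ℝ} {i : Fin (n + 1)}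
    (hN : ∀ B : Matrix (Fin n) (Fin (n + 1)) K, B ∈ F.matrix → (∀ j, rowCofactors i B j ≠ 0) →
      ((gridHyperplane F (rowCofactors i B) δ).ncard : ℝ) ≤ N) (N_nonneg : 0 ≤ N) :
    ((matricesWithDetSpannedRow F δ i).ncard : ℝ) ≤ (F.ncard : ℝ) ^ (n * (n + 1)) * N +
      (n + 1) * ((matricesWithDet n F 0).ncard * (F.ncard : ℝ) ^ n) * (F.ncard : ℝ) ^ n := by
  have cover : matricesWithDetSpannedRow F δ i ⊆
      {A ∈ matricesWithDet (n + 1) F δ |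
        ∀ j, rowCofactors i (A.submatrix i.succAbove id) j ≠ 0} ∪
      {A ∈ matricesWithDetSpannedRow F δ i |
        ∃ j, rowCofactors i (A.submatrix i.succAbove id) j = 0} := by
    intro A hA
    by_cases h : ∃ j, rowCofactors i (A.submatrix i.succAbove id) j = 0
    · exact Or.inr ⟨hA, h⟩
    · exact Or.inl ⟨hA.1, not_exists.mp h⟩
  calc ((matricesWithDetSpannedRow F δ i).ncard : ℝ) ≤ _ := by
        exact_mod_cast (Set.ncard_le_ncard cover ((finite_matrix hF).subset
          (Set.union_subset (fun _ hA ↦ hA.1.1) fun _ hA ↦ hA.1.1.1))).trans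
            (Set.ncard_union_le _ _)
    _ ≤ _ := add_le_add (ncard_setOf_forall_rowCofactors_ne_zero_le hF hN N_nonneg)
        (ncard_setOf_spannedRow_exists_rowCofactors_eq_zero_le hF i)

theorem ncard_matricesWithDet_succ_le (hF : F.Finite) {N : ℝ}
    (hN : ∀ (i : Fin (n + 1)) (B : Matrix (Fin n) (Fin (n + 1)) K), B ∈ F.matrix →
      (∀ j, rowCofactors i B j ≠ 0) →
        ((gridHyperplane F (rowCofactors i B) δ).ncard : ℝ) ≤ N) (N_nonneg : 0 ≤ N) :
    ((matricesWithDet (n + 1) F δ).ncard : ℝ) ≤ (n + 1) * ((F.ncard : ℝ) ^ (n * (n + 1)) * N +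
      (n + 1) * ((matricesWithDet n F 0).ncard * (F.ncard : ℝ) ^ n) * (F.ncard : ℝ) ^ n) := by
  have ncard_le : (matricesWithDet (n + 1) F δ).ncard ≤
      ∑ i : Fin (n + 1), (matricesWithDetSpannedRow F δ i).ncard :=
    (Set.ncard_le_ncard matricesWithDet_subset_iUnion_spannedRow
      (Set.finite_iUnion fun _ ↦ (finite_matrix hF).subset fun _ hA ↦ hA.1.1)).trans
      (Set.ncard_iUnion_le_of_fintype _)
  calc ((matricesWithDet (n + 1) F δ).ncard : ℝ)
      ≤ ∑ i : Fin (n + 1), ((matricesWithDetSpannedRow F δ i).ncard : ℝ) := by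
        exact_mod_cast ncard_le
    _ ≤ ∑ _i : Fin (n + 1), _ :=
        sum_le_sum fun i _ ↦ ncard_matricesWithDetSpannedRow_le hF (hN i) N_nonneg
    _ = _ := by
        rw [sum_const, card_univ, Fintype.card_fin, nsmul_eq_mul, Nat.cast_add_one]

end FiniteGrid

/-! ### Farey fractions -/

lemma gridHyperplane.smul_eq {ι K : Type*} [Fintype ι] [Field K] (F : Set K) (c : ι → K) (t : K)
    {q : K} (hq : q ≠ 0) : gridHyperplane F (q • c) (q * t) = gridHyperplane F c t := by
  ext x
  simp only [gridHyperplane, Set.mem_ofPred_eq, smul_dotProduct, smul_eq_mul, mul_right_inj' hq]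

lemma mem_farey_natCast {h : ℕ} {x : ℚ} : x ∈ Farey h ↔ |x.num| ≤ h ∧ x.den ≤ h := by
  simp only [Farey, Set.mem_ofPred_eq, Nat.cast_le, and_congr_left_iff]
  exact fun _ ↦ by exact_mod_cast Iff.rfl

lemma farey_natFloor {H : ℝ} (hH : 0 ≤ H) : Farey ⌊H⌋₊ = Farey H := by
  ext x
  simp only [Farey, Set.mem_ofPred_eq, ← Int.cast_abs, Int.abs_eq_natAbs, Int.cast_natCast,
    Nat.cast_le, Nat.le_floor_iff hH]

lemma mapsTo_num_den_farey (h : ℕ) :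
    Set.MapsTo (fun x : ℚ ↦ (x.num, x.den)) (Farey h) (Icc (-(h : ℤ)) h ×ˢ Icc 1 h : Finset _) := by
  intro x hx
  obtain ⟨num_le, den_le⟩ := mem_farey_natCast.mp hx
  exact mem_coe.mpr (mem_product.mpr ⟨mem_Icc.mpr (abs_le.mp num_le),
    mem_Icc.mpr ⟨x.den_pos, den_le⟩⟩)

lemma injOn_num_den (S : Set ℚ) : S.InjOn fun x ↦ (x.num, x.den) := fun _ _ _ _ eq ↦
  Rat.ext (congrArg Prod.fst eq) (congrArg Prod.snd eq)

lemma finite_farey (h : ℕ) : (Farey h).Finite :=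
  Set.Finite.of_injOn (mapsTo_num_den_farey h) (injOn_num_den _) (finite_toSet _)

lemma ncard_farey_le (h : ℕ) : (Farey h).ncard ≤ 3 * h ^ 2 := by
  calc (Farey h).ncard ≤ #(Icc (-(h : ℤ)) h ×ˢ Icc 1 h) := by
        rw [← Set.ncard_coe_finset]
        exact Set.ncard_le_ncard_of_injOn _ (mapsTo_num_den_farey h) (injOn_num_den _)
          (finite_toSet _)
    _ = (2 * h + 1) * h := by
        rw [card_product, Int.card_Icc, Nat.card_Icc]
        congr 1
        omega
    _ ≤ 3 * h ^ 2 := by nlinarith [Nat.le_self_pow two_ne_zero h]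

lemma ncard_farey_pow_le (h k : ℕ) :
    ((Farey h).ncard : ℝ) ^ k ≤ 3 ^ k * (h : ℝ) ^ (2 * k : ℝ) := by
  calc ((Farey h).ncard : ℝ) ^ k ≤ (3 * (h : ℝ) ^ 2) ^ k := by
        gcongr
        exact_mod_cast ncard_farey_le h
    _ = 3 ^ k * (h : ℝ) ^ (2 * k : ℝ) := by
        rw [mul_pow, ← pow_mul, ← Real.rpow_natCast (h : ℝ), Nat.cast_mul, Nat.cast_ofNat]

lemma ncard_gridHyperplane_farey_le {k h : ℕ} (hh : 1 ≤ h) {c : Fin k → ℤ} (hc : ∀ j, c j ≠ 0)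
    {M : ℕ} (hcM : ∀ j, |c j| ≤ M) {T : ℝ}
    (hT : ∀ m : ℕ, m ≠ 0 → m ≤ M * h ^ k → #m.divisors * (1 + Real.log h) ≤ T) (t : ℚ) :
    ((gridHyperplane (Farey h) (fun j ↦ (c j : ℚ)) t).ncard : ℝ) ≤ (4 * h * T) ^ k := by
  have den_mem : ∀ x ∈ gridHyperplane (Farey h) (fun j ↦ (c j : ℚ)) t,
      (fun j ↦ (x j).den) ∈ Fintype.piFinset fun _ ↦ Icc 1 h := fun x hx ↦
    Fintype.mem_piFinset.mpr fun j ↦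
      mem_Icc.mpr ⟨(x j).den_pos, (mem_farey_natCast.mp (hx.1 j)).2⟩
  refine (ncard_le_sum_of_ncard_fiber_le (gridHyperplane.finite (finite_farey h) _ _) den_mem
    fun s hs ↦ ?_).trans (sum_numeratorWeight_le hh hc hcM hT)
  refine le_trans (Nat.cast_le.mpr ?_) (ncard_numeratorSolutions_le c s
    (fun j ↦ mem_Icc.mp (Fintype.mem_piFinset.mp hs j)) t)
  refine Set.ncard_le_ncard_of_injOn (fun x j ↦ (x j).num) ?_ ?_ (numeratorSolutions.finite _ _ _ _)
  · rintro x ⟨hx, rfl⟩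
    refine ⟨fun j ↦ (mem_farey_natCast.mp (hx.1 j)).1, ?_⟩
    simpa only [Rat.num_div_den, dotProduct] using hx.2
  · rintro x ⟨-, hx⟩ y ⟨-, hy⟩ num_eq
    exact funext fun j ↦ Rat.ext (congrFun num_eq j) (congrFun (hx.trans hy.symm) j)

lemma rowCofactors_smul {R : Type*} [CommRing R] {n : ℕ} (i : Fin (n + 1)) (a : R)
    (B : Matrix (Fin n) (Fin (n + 1)) R) :
    rowCofactors i (a • B) = a ^ n • rowCofactors i B := by
  ext j
  simp only [rowCofactors, submatrix_smul, Pi.smul_apply, det_smul, Fintype.card_fin, smul_eq_mul,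
    mul_left_comm]

lemma rowCofactors_map {R S : Type*} [CommRing R] [CommRing S] {n : ℕ} (f : R →+* S)
    (i : Fin (n + 1)) (B : Matrix (Fin n) (Fin (n + 1)) R) (j : Fin (n + 1)) :
    rowCofactors i (B.map f) j = f (rowCofactors i B j) := by
  simp only [rowCofactors, map_mul, map_pow, map_neg, map_one, RingHom.map_det,
    RingHom.mapMatrix_apply, submatrix_map]

lemma abs_rowCofactors_le {R : Type*} [CommRing R] [LinearOrder R] [IsStrictOrderedRing R] {n : ℕ}
    (i : Fin (n + 1)) {B : Matrix (Fin n) (Fin (n + 1)) R} {b : R} (hB : ∀ k l, |B k l| ≤ b)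
    (j : Fin (n + 1)) : |rowCofactors i B j| ≤ n.factorial * b ^ n := by
  rw [rowCofactors, abs_mul, abs_neg_one_pow, one_mul]
  simpa using det_le (A := B.submatrix id j.succAbove) (abv := AbsoluteValue.abs)
    fun k l ↦ hB k (j.succAbove l)

lemma exists_int_matrix_map_eq_smul {m n : Type*} [Fintype m] [Fintype n] {h : ℕ}
    {B : Matrix m n ℚ} (hB : B ∈ (Farey h).matrix) :
    ∃ D : ℚ, D ≠ 0 ∧ ∃ M : Matrix m n ℤ, M.map (Int.castRingHom ℚ) = D • B ∧
      ∀ k l, |M k l| ≤ h ^ (Fintype.card m * Fintype.card n) := by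
  classical
  refine ⟨∏ p : m × n, (B p.1 p.2).den, prod_ne_zero_iff.mpr fun p _ ↦ by simp,
    of fun k l ↦ (B k l).num * ∏ p ∈ univ.erase (k, l), ((B p.1 p.2).den : ℤ), ?_,
    fun k l ↦ ?_⟩
  · ext k l
    rw [Matrix.smul_apply, map_apply, of_apply, ← mul_prod_erase univ _ (mem_univ (k, l)),
      smul_eq_mul, mul_right_comm, Rat.den_mul_eq_num]
    simp
  · have num_le := (mem_farey_natCast.mp (hB k l)).1
    have prod_le : ∏ p ∈ univ.erase (k, l), (B p.1 p.2).den ≤ h ^ #(univ.erase (k, l)) :=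
      prod_le_pow_card _ _ _ fun p _ ↦ (mem_farey_natCast.mp (hB p.1 p.2)).2
    calc |(B k l).num * ∏ p ∈ univ.erase (k, l), ((B p.1 p.2).den : ℤ)|
        = |(B k l).num| * (∏ p ∈ univ.erase (k, l), (B p.1 p.2).den : ℕ) := by
          rw [abs_mul, ← Nat.cast_prod, Nat.abs_cast]
      _ ≤ h * (h ^ #(univ.erase (k, l)) : ℕ) := by gcongr
      _ = h ^ (Fintype.card m * Fintype.card n) := by
          rw [Nat.cast_pow, ← pow_succ', card_erase_add_one (mem_univ _), card_univ,
            Fintype.card_prod]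

lemma ncard_gridHyperplane_rowCofactors_le {n h : ℕ} (hh : 1 ≤ h) {T : ℝ}
    (hT : ∀ m : ℕ, m ≠ 0 → m ≤ n.factorial * (h ^ (n * (n + 1))) ^ n * h ^ (n + 1) →
      #m.divisors * (1 + Real.log h) ≤ T)
    {B : Matrix (Fin n) (Fin (n + 1)) ℚ} (hB : B ∈ (Farey h).matrix) {i : Fin (n + 1)}
    (hBi : ∀ j, rowCofactors i B j ≠ 0) (δ : ℚ) :
    ((gridHyperplane (Farey h) (rowCofactors i B) δ).ncard : ℝ) ≤ (4 * h * T) ^ (n + 1) := by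
  obtain ⟨D, hD, M, hM, M_le⟩ := exists_int_matrix_map_eq_smul hB
  simp only [Fintype.card_fin] at M_le
  have cast_eq : (fun j ↦ ((rowCofactors i M j : ℤ) : ℚ)) = D ^ n • rowCofactors i B := by
    rw [← rowCofactors_smul, ← hM]
    exact funext fun j ↦ (rowCofactors_map (Int.castRingHom ℚ) i M j).symm
  have ne_zero (j : Fin (n + 1)) : rowCofactors i M j ≠ 0 := by
    have : ((rowCofactors i M j : ℤ) : ℚ) ≠ 0 := by
      rw [congrFun cast_eq j]
      exact mul_ne_zero (pow_ne_zero n hD) (hBi j)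
    exact_mod_cast this
  rw [← gridHyperplane.smul_eq _ _ _ (pow_ne_zero n hD), ← cast_eq]
  exact ncard_gridHyperplane_farey_le hh ne_zero
    (fun j ↦ by exact_mod_cast abs_rowCofactors_le i M_le j) hT _

lemma exists_ncard_gridHyperplane_rowCofactors_le_rpow (n : ℕ) {ε : ℝ} (hε : 0 < ε) :
    ∃ C : ℝ, 0 ≤ C ∧ ∀ h : ℕ, 1 ≤ h → ∀ B : Matrix (Fin n) (Fin (n + 1)) ℚ,
      B ∈ (Farey h).matrix → ∀ i, (∀ j, rowCofactors i B j ≠ 0) → ∀ δ,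
        ((gridHyperplane (Farey h) (rowCofactors i B) δ).ncard : ℝ) ≤
          C * (h : ℝ) ^ (n + 1 + ε) := by
  obtain ⟨C, hC, divisors_le⟩ := exists_card_divisors_mul_log_le_rpow
    (Nat.cast_nonneg n.factorial) (n * (n + 1) * n + (n + 1))
    (show 0 < ε / (n + 1) by positivity)
  refine ⟨(4 * C) ^ (n + 1), by positivity, fun h hh B hB i hBi δ ↦ ?_⟩
  calc ((gridHyperplane (Farey h) (rowCofactors i B) δ).ncard : ℝ)
      ≤ (4 * h * (C * (h : ℝ) ^ (ε / (n + 1)))) ^ (n + 1) := by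
        refine ncard_gridHyperplane_rowCofactors_le hh (fun m hm hmh ↦ ?_) hB hBi δ
        refine divisors_le h m hh hm ?_
        rw [← pow_mul, mul_assoc, ← pow_add] at hmh
        exact_mod_cast hmh
    _ = (4 * C) ^ (n + 1) * ((h : ℝ) ^ (n + 1) * ((h : ℝ) ^ (ε / (n + 1))) ^ (n + 1)) := by ring
    _ = (4 * C) ^ (n + 1) * (h : ℝ) ^ (n + 1 + ε) := by
        rw [← Real.rpow_mul_natCast h.cast_nonneg, Nat.cast_add_one,
          div_mul_cancel₀ ε (by positivity), Real.rpow_add (by exact_mod_cast hh),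
          ← Nat.cast_add_one, Real.rpow_natCast]

lemma ncard_matricesWithDet_succ_farey_le {n h : ℕ} (hh : 1 ≤ h) {ε C₁ C₂ : ℝ} (hC₁ : 0 ≤ C₁)
    (hC₂ : 0 ≤ C₂) {δ : ℚ}
    (generic_le : ∀ (i : Fin (n + 1)) (B : Matrix (Fin n) (Fin (n + 1)) ℚ), B ∈ (Farey h).matrix →
      (∀ j, rowCofactors i B j ≠ 0) →
        ((gridHyperplane (Farey h) (rowCofactors i B) δ).ncard : ℝ) ≤ C₁ * (h : ℝ) ^ (n + 1 + ε))
    (singular_le : ((matricesWithDet n (Farey h) 0).ncard : ℝ) ≤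
      C₂ * (h : ℝ) ^ (2 * (n : ℝ) ^ 2 - n + ε)) :
    ((matricesWithDet (n + 1) (Farey h) δ).ncard : ℝ) ≤
      (n + 1) * (3 ^ (n * (n + 1)) * C₁ + (n + 1) * C₂ * 3 ^ n * 3 ^ n) *
        (h : ℝ) ^ (2 * (n + 1 : ℝ) ^ 2 - (n + 1) + ε) := by
  have one_le : (1 : ℝ) ≤ h := by exact_mod_cast hh
  have h_pos : (0 : ℝ) < h := by positivity
  set E : ℝ := 2 * (n + 1) ^ 2 - (n + 1) + ε
  have generic_exponent : 2 * ((n * (n + 1) : ℕ) : ℝ) + (n + 1 + ε) ≤ E := by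
    push_cast
    linarith
  have singular_exponent : 2 * (n : ℝ) ^ 2 - n + ε + 2 * n + 2 * n ≤ E := by linarith
  calc ((matricesWithDet (n + 1) (Farey h) δ).ncard : ℝ)
      ≤ (n + 1) * (((Farey h).ncard : ℝ) ^ (n * (n + 1)) * (C₁ * (h : ℝ) ^ (n + 1 + ε)) +
          (n + 1) * ((matricesWithDet n (Farey h) 0).ncard * ((Farey h).ncard : ℝ) ^ n) *
            ((Farey h).ncard : ℝ) ^ n) :=
        ncard_matricesWithDet_succ_le (finite_farey h) generic_le (by positivity)
    _ ≤ (n + 1) * (3 ^ (n * (n + 1)) * (h : ℝ) ^ (2 * (n * (n + 1) : ℕ) : ℝ) *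
            (C₁ * (h : ℝ) ^ (n + 1 + ε)) +
          (n + 1) * (C₂ * (h : ℝ) ^ (2 * (n : ℝ) ^ 2 - n + ε) *
            (3 ^ n * (h : ℝ) ^ (2 * n : ℝ))) * (3 ^ n * (h : ℝ) ^ (2 * n : ℝ))) := by
        gcongr
        exacts [ncard_farey_pow_le _ _, ncard_farey_pow_le _ _, ncard_farey_pow_le _ _]
    _ = (n + 1) * (3 ^ (n * (n + 1)) * C₁ *
            (h : ℝ) ^ (2 * (n * (n + 1) : ℕ) + (n + 1 + ε) : ℝ) +
          (n + 1) * C₂ * 3 ^ n * 3 ^ n *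
            (h : ℝ) ^ (2 * (n : ℝ) ^ 2 - n + ε + 2 * n + 2 * n : ℝ)) := by
        rw [Real.rpow_add h_pos (2 * _), Real.rpow_add h_pos (_ + 2 * _),
          Real.rpow_add h_pos _ (2 * _)]
        ring
    _ ≤ (n + 1) * (3 ^ (n * (n + 1)) * C₁ * (h : ℝ) ^ E +
          (n + 1) * C₂ * 3 ^ n * 3 ^ n * (h : ℝ) ^ E) := by
        gcongr
    _ = _ := by ring

theorem exists_ncard_matricesWithDet_farey_le_rpow (n : ℕ) {ε : ℝ} (hε : 0 < ε) :
    ∃ C : ℝ, 0 ≤ C ∧ ∀ h : ℕ, 1 ≤ h → ∀ δ : ℚ,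
      ((matricesWithDet n (Farey h) δ).ncard : ℝ) ≤ C * (h : ℝ) ^ (2 * (n : ℝ) ^ 2 - n + ε) := by
  induction n with
  | zero =>
    refine ⟨1, zero_le_one, fun h hh δ ↦ ?_⟩
    calc ((matricesWithDet 0 (Farey h) δ).ncard : ℝ) ≤ 1 := by
          exact_mod_cast Set.ncard_le_one_of_subsingleton _
      _ ≤ 1 * (h : ℝ) ^ (2 * ((0 : ℕ) : ℝ) ^ 2 - (0 : ℕ) + ε) := by
          rw [one_mul]
          exact Real.one_le_rpow (by exact_mod_cast hh) (by simpa using hε.le)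
  | succ n ih =>
    obtain ⟨C₁, hC₁, generic_le⟩ := exists_ncard_gridHyperplane_rowCofactors_le_rpow n hε
    obtain ⟨C₂, hC₂, singular_le⟩ := ih
    refine ⟨(n + 1) * (3 ^ (n * (n + 1)) * C₁ + (n + 1) * C₂ * 3 ^ n * 3 ^ n), by positivity,
      fun h hh δ ↦ ?_⟩
    rw [Nat.cast_add_one]
    exact ncard_matricesWithDet_succ_farey_le hh hC₁ hC₂
      (fun i B hB hBi ↦ generic_le h hh B hB i hBi δ) (singular_le h hh 0)

theorem stmt3_general (n : ℕ) :
    ∀ ε > (0 : ℝ), ∃ C : ℝ, ∀ H : ℝ, H ≥ 1 → ∀ δ : ℚ,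
      (Set.ncard {A : Matrix (Fin n) (Fin n) ℚ |
          (∀ i j, A i j ∈ Farey H) ∧ A.det = δ} : ℝ) ≤
        C * H ^ ((2 * n ^ 2 : ℝ) - n + ε) := by
  intro ε hε
  obtain ⟨C, hC, ncard_le⟩ := exists_ncard_matricesWithDet_farey_le_rpow n hε
  refine ⟨C, fun H hH δ ↦ ?_⟩
  have H_nonneg : 0 ≤ H := zero_le_one.trans hH
  have exponent_nonneg : 0 ≤ 2 * (n : ℝ) ^ 2 - n + ε := by
    have : (n : ℝ) ≤ (n : ℝ) ^ 2 := by exact_mod_cast Nat.le_self_pow two_ne_zero n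
    nlinarith
  rw [← farey_natFloor H_nonneg]
  calc _ ≤ C * (⌊H⌋₊ : ℝ) ^ (2 * (n : ℝ) ^ 2 - n + ε) :=
        ncard_le _ (Nat.one_le_floor_iff H |>.mpr hH) δ
    _ ≤ C * H ^ (2 * (n : ℝ) ^ 2 - n + ε) := by
        gcongr
        exact Nat.floor_le H_nonneg

theorem stmt3 (n : ℕ) (hn : n ≥ 3) :
    ∀ ε > (0 : ℝ), ∃ C : ℝ, ∀ H : ℝ, H ≥ 2 → ∀ δ : ℚ,
      (Set.ncard {A : Matrix (Fin n) (Fin n) ℚ |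
          (∀ i j, A i j ∈ Farey H) ∧ A.det = δ} : ℝ) ≤
        C * H ^ ((2 * n ^ 2 : ℝ) - n + ε) := by
  intro ε hε
  obtain ⟨C, hC⟩ := stmt3_general n ε hε
  exact ⟨C, fun H hH ↦ hC H (one_le_two.trans hH)⟩
end

section
/- Let n ≥ 2 be an integer. For every ε > 0 there exists H_0 such that for all real H ≥ H_0 the number of n×n matrices with all entries in F(H) and with determinant equal to 1 is at least H^{n²−ε}. -/
/-!
A lower triangular matrix with diagonal `d` has determinant `∏ i, d i`, so its entries below the
diagonal can be chosen freely. Since `F(H)` has `≫ H ^ 2` elements, these `n (n - 1) / 2` entries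
contribute `≫ H ^ (n ^ 2 - n)` choices. For the diagonal take the quotients
`x₀ / x₁, x₁ / x₂, …, xₙ₋₁ / x₀` of integers `1 ≤ xᵢ ≤ H`: their product telescopes to `1`, and if
`x₀` and `x₁` are coprime, then the first quotient determines both of them and the others determine
the remaining `xᵢ`. As a positive proportion of pairs is coprime, this gives `≫ H ^ n` diagonals.
-/

open Finset Filter

section CoprimePairs

/-- The coprime pairs of positive integers at most `N`, which are the positive fractions in lowest
terms of height at most `N`. -/
def coprimePairs (N : ℕ) : Finset (ℕ × ℕ) :=
  {p ∈ Ioc 0 N ×ˢ Ioc 0 N | p.1.Coprime p.2}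

lemma mem_coprimePairs {N : ℕ} {p : ℕ × ℕ} :
    p ∈ coprimePairs N ↔ (p.1 ∈ Ioc 0 N ∧ p.2 ∈ Ioc 0 N) ∧ p.1.Coprime p.2 := by
  rw [coprimePairs, mem_filter, mem_product]

lemma sum_Ioc_one_inv_sq_le (N : ℕ) : ∑ d ∈ Ioc 1 N, ((d : ℝ) ^ 2)⁻¹ ≤ 3 / 4 := by
  rcases lt_or_ge N 2 with hN | hN
  · rw [Ioc_eq_empty (by lia), sum_empty]
    norm_num
  · have tail : ∑ d ∈ Ioc 2 N, ((d : ℝ) ^ 2)⁻¹ ≤ ((2 : ℕ) : ℝ)⁻¹ - (N : ℝ)⁻¹ :=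
      sum_Ioc_inv_sq_le_sub two_ne_zero hN
    have inv_nonneg : 0 ≤ (N : ℝ)⁻¹ := by positivity
    calc ∑ d ∈ Ioc 1 N, ((d : ℝ) ^ 2)⁻¹
        = ((2 : ℕ) ^ 2 : ℝ)⁻¹ + ∑ d ∈ Ioc 2 N, ((d : ℝ) ^ 2)⁻¹ := by
          rw [← sum_Ioc_consecutive _ one_le_two hN, show Ioc 1 2 = {2} from rfl, sum_singleton]
      _ ≤ ((2 : ℕ) ^ 2 : ℝ)⁻¹ + (((2 : ℕ) : ℝ)⁻¹ - (N : ℝ)⁻¹) := by gcongr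
      _ ≤ 3 / 4 := by norm_num; linarith

lemma card_not_coprime_le (N : ℕ) :
    #{p ∈ Ioc 0 N ×ˢ Ioc 0 N | ¬ p.1.Coprime p.2} ≤ ∑ d ∈ Ioc 1 N, (N / d) ^ 2 := by
  let multiples (d : ℕ) : Finset ℕ := {a ∈ Ioc 0 N | d ∣ a}
  have card_multiples (d : ℕ) : #(multiples d ×ˢ multiples d) = (N / d) ^ 2 := by
    rw [card_product, Nat.Ioc_filter_dvd_card_eq_div, sq]
  have cover : {p ∈ Ioc 0 N ×ˢ Ioc 0 N | ¬ p.1.Coprime p.2} ⊆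
      (Ioc 1 N).biUnion fun d ↦ multiples d ×ˢ multiples d := by
    rintro ⟨a, b⟩ hab
    simp only [mem_filter, mem_product, mem_Ioc, Nat.coprime_iff_gcd_eq_one] at hab
    obtain ⟨⟨ha, hb⟩, hgcd⟩ := hab
    have gcd_pos : 0 < a.gcd b := Nat.gcd_pos_of_pos_left _ ha.1
    have gcd_le : a.gcd b ≤ a := Nat.gcd_le_left _ ha.1
    simp only [multiples, mem_biUnion, mem_product, mem_filter, mem_Ioc]
    exact ⟨a.gcd b, by lia, ⟨ha, Nat.gcd_dvd_left a b⟩, hb, Nat.gcd_dvd_right a b⟩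
  calc _ ≤ _ := card_le_card cover
    _ ≤ ∑ d ∈ Ioc 1 N, #(multiples d ×ˢ multiples d) := card_biUnion_le
    _ = ∑ d ∈ Ioc 1 N, (N / d) ^ 2 := sum_congr rfl fun d _ ↦ card_multiples d

lemma sq_le_four_mul_card_coprimePairs (N : ℕ) : N ^ 2 ≤ 4 * #(coprimePairs N) := by
  have total : #(coprimePairs N) + #{p ∈ Ioc 0 N ×ˢ Ioc 0 N | ¬ p.1.Coprime p.2} = N ^ 2 := by
    rw [coprimePairs, card_filter_add_card_filter_not, card_product, Nat.card_Ioc, Nat.sub_zero, sq]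
  have few : (#{p ∈ Ioc 0 N ×ˢ Ioc 0 N | ¬ p.1.Coprime p.2} : ℝ) ≤ N ^ 2 * (3 / 4) :=
    calc _ ≤ ∑ d ∈ Ioc 1 N, ((N / d : ℕ) : ℝ) ^ 2 := by exact_mod_cast card_not_coprime_le N
      _ ≤ ∑ d ∈ Ioc 1 N, ((N : ℝ) / d) ^ 2 := by gcongr; exact Nat.cast_div_le
      _ = N ^ 2 * ∑ d ∈ Ioc 1 N, ((d : ℝ) ^ 2)⁻¹ := by
        simp only [mul_sum, div_pow, ← div_eq_mul_inv]
      _ ≤ N ^ 2 * (3 / 4) := by gcongr; exact sum_Ioc_one_inv_sq_le N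
  have total' : (#(coprimePairs N) : ℝ) + #{p ∈ Ioc 0 N ×ˢ Ioc 0 N | ¬ p.1.Coprime p.2} = N ^ 2 :=
    mod_cast total
  have : (N : ℝ) ^ 2 ≤ 4 * #(coprimePairs N) := by linarith
  exact_mod_cast this

lemma eq_and_eq_of_natCast_div_eq {a b c d : ℕ} (hb : 0 < b) (hd : 0 < d) (hab : a.Coprime b)
    (hcd : c.Coprime d) (h : (a : ℚ) / b = c / d) : a = c ∧ b = d :=
  mod_cast Rat.div_int_inj (a := a) (b := b) (c := c) (d := d) (Int.natCast_pos.2 hb)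
    (Int.natCast_pos.2 hd) hab hcd (by simpa only [Int.cast_natCast] using h)

end CoprimePairs

section Farey

variable {H : ℝ}

lemma farey_finite (H : ℝ) : (Farey H).Finite := by
  have bounded : Set.MapsTo (fun q : ℚ ↦ (q.num, q.den)) (Farey H)
      (Set.Icc (-⌊H⌋) ⌊H⌋ ×ˢ Set.Iic ⌊H⌋₊) := by
    rintro q ⟨hnum, hden⟩
    refine ⟨abs_le.1 (Int.le_floor.2 ?_), Nat.le_floor hden⟩
    exact_mod_cast hnum
  refine Set.Finite.of_injOn bounded (fun p _ q _ hpq ↦ ?_)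
    ((Set.finite_Icc _ _).prod (Set.finite_Iic _))
  exact Rat.ext (congrArg Prod.fst hpq) (congrArg Prod.snd hpq)

lemma zero_mem_farey (hH : 1 ≤ H) : 0 ∈ Farey H := by
  constructor
  · simpa using zero_le_one.trans hH
  · simpa using hH

lemma natCast_div_mem_farey {a b : ℕ} (ha : a ∈ Ioc 0 ⌊H⌋₊) (hb : b ∈ Ioc 0 ⌊H⌋₊) :
    (a / b : ℚ) ∈ Farey H := by
  obtain ⟨ha₀, ha⟩ := mem_Ioc.1 ha
  obtain ⟨hb₀, hb⟩ := mem_Ioc.1 hb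
  have eq_divInt : (a / b : ℚ) = Rat.divInt a b := by
    rw [Rat.divInt_eq_div, Int.cast_natCast, Int.cast_natCast]
  have num_dvd : (a / b : ℚ).num ∣ a :=
    eq_divInt ▸ Rat.num_dvd a (Int.natCast_ne_zero.2 hb₀.ne')
  have den_dvd : ((a / b : ℚ).den : ℤ) ∣ b := eq_divInt ▸ Rat.den_dvd a b
  have num_le : |(a / b : ℚ).num| ≤ a := Int.le_of_dvd (mod_cast ha₀) ((abs_dvd _ _).2 num_dvd)
  have den_le : (a / b : ℚ).den ≤ b := Nat.le_of_dvd hb₀ (mod_cast den_dvd)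
  exact ⟨le_trans (mod_cast num_le) ((Nat.le_floor_iff' ha₀.ne').1 ha),
    (Nat.le_floor_iff' (Rat.den_ne_zero _)).1 (den_le.trans hb)⟩

lemma sq_floor_le_four_mul_ncard_farey (H : ℝ) : ⌊H⌋₊ ^ 2 ≤ 4 * (Farey H).ncard := by
  have card_le : #(coprimePairs ⌊H⌋₊) ≤ (Farey H).ncard := by
    rw [← Set.ncard_coe_finset]
    refine Set.ncard_le_ncard_of_injOn (fun p ↦ (p.1 / p.2 : ℚ)) (fun p hp ↦ ?_)
      (fun p hp q hq hpq ↦ ?_) (farey_finite H)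
    · obtain ⟨⟨h₁, h₂⟩, -⟩ := mem_coprimePairs.1 hp
      exact natCast_div_mem_farey h₁ h₂
    · obtain ⟨⟨-, hp₂⟩, hp⟩ := mem_coprimePairs.1 hp
      obtain ⟨⟨-, hq₂⟩, hq⟩ := mem_coprimePairs.1 hq
      exact Prod.ext_iff.2
        (eq_and_eq_of_natCast_div_eq (mem_Ioc.1 hp₂).1 (mem_Ioc.1 hq₂).1 hp hq hpq)
  calc ⌊H⌋₊ ^ 2 ≤ 4 * #(coprimePairs ⌊H⌋₊) := sq_le_four_mul_card_coprimePairs _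
    _ ≤ 4 * (Farey H).ncard := by gcongr

end Farey

section CyclicQuotient

/-- The cyclic quotients `x₀ / x₁, x₁ / x₂, …, xₙ₋₁ / x₀` of a tuple `x`: addition in `Fin n` wraps
around. They parametrise diagonals of determinant one. -/
def cyclicQuotient {K : Type*} [Div K] {n : ℕ} [NeZero n] (x : Fin n → K) (i : Fin n) : K :=
  x i / x (i + 1)

lemma prod_cyclicQuotient {K : Type*} [CommGroupWithZero K] {n : ℕ} [NeZero n] {x : Fin n → K}
    (hx : ∀ i, x i ≠ 0) : ∏ i, cyclicQuotient x i = 1 := by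
  have shift : ∏ i, x (i + 1) = ∏ i, x i := Equiv.prod_comp (Equiv.addRight 1) x
  simp only [cyclicQuotient]
  rw [prod_div_distrib, shift, div_self (prod_ne_zero_iff.2 fun i _ ↦ hx i)]

lemma eq_of_cyclicQuotient_eq {K : Type*} [GroupWithZero K] {n : ℕ} {x y : Fin (n + 1) → K}
    (hy : ∀ i, y i ≠ 0) (h₀ : x 0 = y 0) (h : cyclicQuotient x = cyclicQuotient y) : x = y := by
  funext i
  induction i using Fin.induction with
  | zero => exact h₀
  | succ i ih =>
    have quotient_eq : x i.castSucc / x i.succ = y i.castSucc / y i.succ := by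
      simpa only [cyclicQuotient, Fin.coeSucc_eq_succ] using congrFun h i.castSucc
    rw [ih, div_eq_mul_inv, div_eq_mul_inv] at quotient_eq
    exact inv_injective (mul_left_cancel₀ (hy _) quotient_eq)

/-- The `(m + 2)`-tuples of positive integers at most `N` whose first two members are coprime,
which is the normalisation that makes them recoverable from their cyclic quotients. -/
def coprimeHeadTuples (m N : ℕ) : Finset (Fin (m + 2) → ℕ) :=
  {x ∈ Fintype.piFinset fun _ ↦ Ioc 0 N | (x 0).Coprime (x 1)}

variable {m N : ℕ}

lemma mem_coprimeHeadTuples {x : Fin (m + 2) → ℕ} :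
    x ∈ coprimeHeadTuples m N ↔ (∀ i, x i ∈ Ioc 0 N) ∧ (x 0).Coprime (x 1) := by
  rw [coprimeHeadTuples, mem_filter, Fintype.mem_piFinset]

lemma card_coprimePairs_mul_pow_le_card_coprimeHeadTuples (m N : ℕ) :
    #(coprimePairs N) * N ^ m ≤ #(coprimeHeadTuples m N) := by
  have card_eq : #(coprimePairs N ×ˢ Fintype.piFinset fun _ : Fin m ↦ Ioc 0 N) =
      #(coprimePairs N) * N ^ m := by
    rw [card_product, Fintype.card_piFinset_const, Nat.card_Ioc, Nat.sub_zero]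
  rw [← card_eq]
  refine card_le_card_of_injOn (fun p ↦ Fin.cons p.1.1 (Fin.cons p.1.2 p.2)) ?_ ?_
  · rintro ⟨⟨a, b⟩, y⟩ h
    obtain ⟨hab, hy⟩ := mem_product.1 h
    obtain ⟨⟨ha, hb⟩, hcop⟩ := mem_coprimePairs.1 hab
    exact mem_coprimeHeadTuples.2
      ⟨Fin.cases ha (Fin.cases hb (Fintype.mem_piFinset.1 hy)), hcop⟩
  · rintro ⟨⟨a, b⟩, y⟩ - ⟨⟨a', b'⟩, y'⟩ - h
    simp only [Fin.cons_inj] at h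
    obtain ⟨rfl, rfl, rfl⟩ := h
    rfl

lemma cyclicQuotient_natCast_injOn (m N : ℕ) :
    Set.InjOn (fun (x : Fin (m + 2) → ℕ) ↦ cyclicQuotient fun i ↦ (x i : ℚ))
      (coprimeHeadTuples m N) := by
  intro x hx y hy hxy
  obtain ⟨hx, hx_cop⟩ := mem_coprimeHeadTuples.1 hx
  obtain ⟨hy, hy_cop⟩ := mem_coprimeHeadTuples.1 hy
  have head : (x 0 / x 1 : ℚ) = y 0 / y 1 := congrFun hxy 0
  have zero_eq : x 0 = y 0 :=
    (eq_and_eq_of_natCast_div_eq (mem_Ioc.1 (hx 1)).1 (mem_Ioc.1 (hy 1)).1 hx_cop hy_cop head).1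
  have cast_eq := eq_of_cyclicQuotient_eq
    (fun i ↦ Nat.cast_ne_zero.2 (mem_Ioc.1 (hy i)).1.ne') (congrArg Nat.cast zero_eq) hxy
  exact funext fun i ↦ Nat.cast_injective (congrFun cast_eq i)

lemma floor_pow_le_four_mul_ncard_prod_eq_one {n : ℕ} (hn : 2 ≤ n) (H : ℝ) :
    ⌊H⌋₊ ^ n ≤ 4 * {d : Fin n → ℚ | (∀ i, d i ∈ Farey H) ∧ ∏ i, d i = 1}.ncard := by
  obtain ⟨m, rfl⟩ := Nat.exists_eq_add_of_le' hn
  set N := ⌊H⌋₊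
  have card_le : #(coprimeHeadTuples m N) ≤
      {d : Fin (m + 2) → ℚ | (∀ i, d i ∈ Farey H) ∧ ∏ i, d i = 1}.ncard := by
    rw [← Set.ncard_coe_finset]
    refine Set.ncard_le_ncard_of_injOn _ (fun x hx ↦ ?_) (cyclicQuotient_natCast_injOn m N)
      ((Set.Finite.pi' fun _ ↦ farey_finite H).subset fun d hd ↦ hd.1)
    obtain ⟨hx, -⟩ := mem_coprimeHeadTuples.1 hx
    exact ⟨fun i ↦ natCast_div_mem_farey (hx i) (hx (i + 1)),
      prod_cyclicQuotient fun i ↦ Nat.cast_ne_zero.2 (mem_Ioc.1 (hx i)).1.ne'⟩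
  calc N ^ (m + 2) = N ^ 2 * N ^ m := by ring
    _ ≤ 4 * #(coprimePairs N) * N ^ m := by gcongr; exact sq_le_four_mul_card_coprimePairs N
    _ = 4 * (#(coprimePairs N) * N ^ m) := mul_assoc _ _ _
    _ ≤ _ := by
      gcongr
      exact (card_coprimePairs_mul_pow_le_card_coprimeHeadTuples m N).trans card_le

end CyclicQuotient

section LowerTriangular

variable {R : Type*} {n : ℕ}

/-- The lower triangular matrix with diagonal `d` whose `i`-th row is `L i` to the left of the
diagonal. -/
def lowerTriangular [Zero R] (d : Fin n → R) (L : ∀ i : Fin n, Fin i → R) :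
    Matrix (Fin n) (Fin n) R :=
  .of fun i j ↦ if h : j < i then L i ⟨j, h⟩ else if i = j then d i else 0

lemma det_lowerTriangular [CommRing R] (d : Fin n → R) (L : ∀ i : Fin n, Fin i → R) :
    (lowerTriangular d L).det = ∏ i, d i := by
  rw [Matrix.det_of_isLowerTriangular]
  · simp [lowerTriangular]
  · intro i j (hij : i < j)
    simp [lowerTriangular, hij.ne, hij.le]

lemma lowerTriangular_injective2 [Zero R] :
    Function.Injective2 (lowerTriangular : (Fin n → R) → (∀ i : Fin n, Fin i → R) → _) := by
  intro d d' L L' h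
  have entry_eq (i j : Fin n) := congrFun (congrFun h i) j
  constructor
  · funext i
    simpa [lowerTriangular] using entry_eq i i
  · funext i j
    have hj : (⟨j, j.2.trans i.2⟩ : Fin n) < i := j.2
    simpa [lowerTriangular, hj] using entry_eq i ⟨j, j.2.trans i.2⟩

lemma lowerTriangular_apply_mem [Zero R] {S : Set R} (h₀ : 0 ∈ S) {d : Fin n → R}
    {L : ∀ i : Fin n, Fin i → R} (hd : ∀ i, d i ∈ S) (hL : ∀ i j, L i j ∈ S) (i j : Fin n) :
    lowerTriangular d L i j ∈ S := by
  simp only [lowerTriangular, Matrix.of_apply]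
  split_ifs
  exacts [hL _ _, hd _, h₀]

lemma ncard_prod_eq_mul_ncard_pow_le_ncard_det_eq [CommRing R] {S : Set R} (hS : S.Finite)
    (h₀ : 0 ∈ S) (n : ℕ) (δ : R) :
    {d : Fin n → R | (∀ i, d i ∈ S) ∧ ∏ i, d i = δ}.ncard * S.ncard ^ n.choose 2 ≤
      {A : Matrix (Fin n) (Fin n) R | (∀ i j, A i j ∈ S) ∧ A.det = δ}.ncard := by
  set D := {d : Fin n → R | (∀ i, d i ∈ S) ∧ ∏ i, d i = δ}
  set M := {A : Matrix (Fin n) (Fin n) R | (∀ i j, A i j ∈ S) ∧ A.det = δ}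
  have : Finite M :=
    (Set.Finite.pi' fun _ ↦ Set.Finite.pi' fun _ ↦ hS).subset fun A hA ↦ hA.1
  have card_fillings : Nat.card (∀ i : Fin n, Fin i → S) = S.ncard ^ n.choose 2 := by
    simp only [Nat.card_pi, prod_const, card_univ, Fintype.card_fin, Nat.card_coe_set_eq,
      prod_pow_eq_pow_sum, Fin.sum_univ_eq_sum_range (fun i ↦ i), sum_range_id,
      Nat.choose_two_right]
  let toMatrix (p : D × (∀ i : Fin n, Fin i → S)) : M :=
    ⟨lowerTriangular p.1 fun i j ↦ p.2 i j,
      lowerTriangular_apply_mem h₀ p.1.2.1 fun i j ↦ (p.2 i j).2,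
      (det_lowerTriangular _ _).trans p.1.2.2⟩
  have toMatrix_injective : toMatrix.Injective := by
    rintro ⟨d, L⟩ ⟨d', L'⟩ h
    have matrix_eq : lowerTriangular d.1 (fun i j ↦ (L i j : R)) =
        lowerTriangular d'.1 fun i j ↦ (L' i j : R) := congrArg Subtype.val h
    obtain ⟨hd, hL⟩ := lowerTriangular_injective2 matrix_eq
    exact Prod.ext (Subtype.ext hd)
      (funext₂ fun i j ↦ Subtype.ext (congrFun (congrFun hL i) j))
  calc D.ncard * S.ncard ^ n.choose 2 = Nat.card (D × (∀ i : Fin n, Fin i → S)) := by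
        rw [Nat.card_prod, card_fillings, Nat.card_coe_set_eq]
    _ ≤ Nat.card M := Nat.card_le_card_of_injective toMatrix toMatrix_injective
    _ = M.ncard := Nat.card_coe_set_eq M

end LowerTriangular

lemma floor_pow_sq_le_mul_ncard_det_eq_one {n : ℕ} (hn : 2 ≤ n) {H : ℝ} (hH : 1 ≤ H) :
    ⌊H⌋₊ ^ n ^ 2 ≤ 4 ^ (n.choose 2 + 1) *
      {A : Matrix (Fin n) (Fin n) ℚ | (∀ i j, A i j ∈ Farey H) ∧ A.det = 1}.ncard := by
  have exponent : n ^ 2 = n + 2 * n.choose 2 := by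
    rw [Nat.choose_two_right, Nat.mul_div_cancel' (Nat.even_mul_pred_self n).two_dvd,
      Nat.mul_sub_one, ← sq, Nat.add_sub_cancel' (Nat.le_self_pow two_ne_zero n)]
  set D := {d : Fin n → ℚ | (∀ i, d i ∈ Farey H) ∧ ∏ i, d i = 1}
  calc ⌊H⌋₊ ^ n ^ 2 = ⌊H⌋₊ ^ n * (⌊H⌋₊ ^ 2) ^ n.choose 2 := by rw [exponent, pow_add, pow_mul]
    _ ≤ 4 * D.ncard * (4 * (Farey H).ncard) ^ n.choose 2 := by
        gcongr
        · exact floor_pow_le_four_mul_ncard_prod_eq_one hn H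
        · exact sq_floor_le_four_mul_ncard_farey H
    _ = 4 ^ (n.choose 2 + 1) * (D.ncard * (Farey H).ncard ^ n.choose 2) := by ring
    _ ≤ _ := by
        gcongr
        exact ncard_prod_eq_mul_ncard_pow_le_ncard_det_eq (farey_finite H) (zero_mem_farey hH) n 1

lemma eventually_rpow_sub_le_mul_rpow {c ε : ℝ} (hc : 0 < c) (hε : 0 < ε) (s : ℝ) :
    ∀ᶠ x : ℝ in atTop, x ^ (s - ε) ≤ c * x ^ s := by
  filter_upwards [(tendsto_rpow_atTop hε).eventually_ge_atTop c⁻¹, eventually_gt_atTop 0]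
    with x hx hx₀
  rw [Real.rpow_sub hx₀, div_le_iff₀ (by positivity), mul_right_comm]
  refine le_mul_of_one_le_left (by positivity) ?_
  exact (inv_le_iff_one_le_mul₀' hc).1 hx

theorem stmt5_general (n : ℕ) (hn : n ≥ 2) :
    ∃ c > (0 : ℝ), ∀ H : ℝ, H ≥ 1 →
      c * H ^ n ^ 2 ≤
        (Set.ncard {A : Matrix (Fin n) (Fin n) ℚ |
            (∀ i j, A i j ∈ Farey H) ∧ A.det = 1} : ℝ) := by
  refine ⟨(2 ^ n ^ 2 * 4 ^ (n.choose 2 + 1))⁻¹, by positivity, fun H hH ↦ ?_⟩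
  rw [inv_mul_le_iff₀ (by positivity), mul_assoc]
  calc H ^ n ^ 2 ≤ (2 * ⌊H⌋₊) ^ n ^ 2 := by
        gcongr
        linarith [Nat.div_two_lt_floor hH]
    _ = 2 ^ n ^ 2 * ⌊H⌋₊ ^ n ^ 2 := mul_pow _ _ _
    _ ≤ _ := by
        gcongr
        exact_mod_cast floor_pow_sq_le_mul_ncard_det_eq_one hn hH

theorem stmt5 (n : ℕ) (hn : n ≥ 2) :
    ∀ ε > (0 : ℝ), ∃ H₀ : ℝ, ∀ H : ℝ, H ≥ H₀ →
      H ^ ((n ^ 2 : ℝ) - ε) ≤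
        (Set.ncard {A : Matrix (Fin n) (Fin n) ℚ |
            (∀ i j, A i j ∈ Farey H) ∧ A.det = 1} : ℝ) := by
  intro ε hε
  obtain ⟨c, hc, lower_bound⟩ := stmt5_general n hn
  refine eventually_atTop.1 ?_
  filter_upwards [eventually_rpow_sub_le_mul_rpow hc hε (n ^ 2), eventually_ge_atTop 1]
    with H hle hH
  exact hle.trans (mod_cast lower_bound H hH)
end
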